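/- arXiv:1309.6917 — 2 statements merged into one kernel-verified Lean document; each statement's English description precedes it below -/
import Mathlib

section
/- Fix l ≥ 1 and κ = (k_1,…,k_l) ∈ (ℤ/2ℤ)^l, and let λ be an l-multipartition of d ≥ 1. Let 1 ≤ r ≤ d, let N = (a,b,j) be the node occupied by r in the row-reading tableau t^λ, let i ∈ ℤ/2ℤ be the residue of N, and let μ be the multipartition whose Young diagram consists of the nodes occupied by 1,…,r in t^λ. Then the diagram of μ has no removable i-nodes below N, and the number of addable i-nodes for μ below N equals β + #{m : j < m ≤ l, k_m = i}, where β = 1 if b is even and β = 0 if b is odd; consequently d_N(μ) = β + #{m : j < m ≤ l, k_m = i}. -/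
/-!
Core definitions: multipartitions, Young diagrams, tableaux, degrees,
in quantum characteristic 2 (residues in ℤ/2ℤ).
Nodes are 0-indexed: the node `(m, a, b)` denotes the box in component `m`,
row `a+1`, column `b+1` of the paper's 1-indexed conventions.
-/

/-- A node: (component, row, column), all 0-indexed. -/
abbrev Node (l : ℕ) := Fin l × ℕ × ℕ

namespace Cyclo

variable {l d : ℕ}

/-- Residue of a node `(m, a, b)`: `κ m + (b - a)` in `ℤ/2ℤ`. -/
def res (κ : Fin l → ZMod 2) (N : Node l) : ZMod 2 :=
  κ N.1 + (N.2.2 : ZMod 2) - (N.2.1 : ZMod 2)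

/-- A set of nodes is (the Young diagram of) a multipartition iff it is
downward closed in rows and columns within each component. -/
def IsDiagram (Y : Set (Node l)) : Prop :=
  ∀ m a b a' b', (m, a, b) ∈ Y → a' ≤ a → b' ≤ b → (m, a', b') ∈ Y

/-- `M` is an addable node for the diagram `Y`. -/
def Addable (Y : Set (Node l)) (M : Node l) : Prop :=
  M ∉ Y ∧ IsDiagram (insert M Y)

/-- `M` is a removable node of the diagram `Y`. -/
def Removable (Y : Set (Node l)) (M : Node l) : Prop :=
  M ∈ Y ∧ IsDiagram (Y \ {M})

/-- `M` is below `N`: strictly later component, or same component and strictly lower row. -/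
def Below (N M : Node l) : Prop :=
  N.1 < M.1 ∨ (N.1 = M.1 ∧ N.2.1 < M.2.1)

/-- `d_N(Y)`: number of addable nodes for `Y` below `N` of the same residue as `N`,
minus the number of removable nodes of `Y` below `N` of the same residue as `N`. -/
noncomputable def dN (κ : Fin l → ZMod 2) (Y : Set (Node l)) (N : Node l) : ℤ :=
  ({M | Addable Y M ∧ res κ M = res κ N ∧ Below N M}.ncard : ℤ)
    - ({M | Removable Y M ∧ res κ M = res κ N ∧ Below N M}.ncard : ℤ)

/-- The Young diagram of the multipartition whose parts are `lam m a` (0-indexed rows). -/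
def diagram (lam : Fin l → ℕ → ℕ) : Set (Node l) :=
  {N | N.2.2 < lam N.1 N.2.1}

/-- `lam` encodes an `l`-multipartition of `d`: each component is a partition
(antitone, vanishing beyond row `d`) and the sizes sum to `d`. -/
def IsMultipartition (lam : Fin l → ℕ → ℕ) (d : ℕ) : Prop :=
  (∀ m, Antitone (lam m)) ∧ (∀ m a, d ≤ a → lam m a = 0) ∧
    ∑ m : Fin l, ∑ a ∈ Finset.range d, lam m a = d

/-- A λ-tableau, encoded by the function sending `r : Fin d` to the node
occupied by the entry `r + 1`: a bijective filling of the diagram by `1, …, d`. -/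
def IsTableau (lam : Fin l → ℕ → ℕ) (t : Fin d → Node l) : Prop :=
  Function.Injective t ∧ Set.range t = diagram lam

/-- A standard λ-tableau: entries increase along rows and down columns of each
component. -/
def IsStandard (lam : Fin l → ℕ → ℕ) (t : Fin d → Node l) : Prop :=
  IsTableau lam t ∧
    ∀ r s : Fin d, (t r).1 = (t s).1 → (t r).2.1 ≤ (t s).2.1 →
      (t r).2.2 ≤ (t s).2.2 → r ≤ s

/-- Lexicographic (row-reading) order on nodes. -/
def NodeLt (N M : Node l) : Prop :=
  N.1 < M.1 ∨ (N.1 = M.1 ∧ (N.2.1 < M.2.1 ∨ (N.2.1 = M.2.1 ∧ N.2.2 < M.2.2)))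

/-- The row-reading tableau `t^λ`: entries `1, …, d` are filled along successive
rows of the components of `λ`, taking the components in order. -/
def IsRowReading (lam : Fin l → ℕ → ℕ) (t : Fin d → Node l) : Prop :=
  IsTableau lam t ∧ ∀ r s : Fin d, r < s → NodeLt (t r) (t s)

/-- The degree of a (standard) tableau: `deg t = Σ_r d_{N_r}(shape of t_{≤ r})`,
which unfolds the recursion `deg t = d_N(λ) + deg (t_{≤ d-1})`, `deg ∅ = 0`. -/
noncomputable def deg (κ : Fin l → ZMod 2) (t : Fin d → Node l) : ℤ :=
  ∑ r : Fin d, dN κ (t '' {s | s ≤ r}) (t r)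

/-- `ε` of a single partition (the sum of `⌊λ_a/2⌋` over rows), as a natural number. -/
def epsPart (d : ℕ) (p : ℕ → ℕ) : ℕ :=
  ∑ a ∈ Finset.range d, p a / 2

/-- `n_i` of a single partition `p` placed in a component with offset `k`:
the number of nodes `(a,b)` of `p` with `k + b - a = i` in `ℤ/2ℤ`. -/
noncomputable def nNodes (k i : ZMod 2) (p : ℕ → ℕ) : ℕ :=
  {N : ℕ × ℕ | N.2 < p N.1 ∧ k + (N.2 : ZMod 2) - (N.1 : ZMod 2) = i}.ncard

/-- The parity `ε(λ)` of an `l`-multipartition. -/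
noncomputable def eps (κ : Fin l → ZMod 2) (d : ℕ) (lam : Fin l → ℕ → ℕ) : ZMod 2 :=
  ((∑ m : Fin l, epsPart d (lam m) : ℕ) : ZMod 2) +
    ((∑ j : Fin l, ∑ m : Fin l, if j < m then nNodes (κ j) (κ m) (lam j) else 0 : ℕ) : ZMod 2)

end Cyclo

/-!
Reading `t^λ` up to the entry at `N = (j, a, b)` (0-indexed) leaves everything below `N` empty.
Hence nothing can be removed there, and a node below `N` can be added only at the start of row
`a + 1` of component `j` or as the first node of a component `m > j`. The former differs from `N`
in residue by `b + 1`, the latter has residue `κ m`.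
-/

namespace Cyclo

variable {l d : ℕ} {κ : Fin l → ZMod 2} {lam : Fin l → ℕ → ℕ} {t : Fin d → Node l}
  {Y : Set (Node l)} {N M : Node l}

theorem Below.nodeLt (h : Below N M) : NodeLt N M :=
  h.imp_right fun ⟨hcomp, hrow⟩ ↦ ⟨hcomp, Or.inl hrow⟩

theorem NodeLt.asymm (h : NodeLt N M) : ¬ NodeLt M N := by
  unfold NodeLt at *
  omega

theorem isDiagram_diagram (hlam : ∀ m, Antitone (lam m)) : IsDiagram (diagram lam) :=
  fun m _ _ _ _ hmem ha hb ↦ (hb.trans_lt hmem).trans_le (hlam m ha)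

theorem IsRowReading.isStandard (ht : IsRowReading lam t) : IsStandard lam t := by
  refine ⟨ht.1, fun r s hcomp hrow hcol ↦ ?_⟩
  by_contra hsr
  have hlt := ht.2 s r (not_le.mp hsr)
  unfold NodeLt at hlt
  omega

theorem IsStandard.isDiagram_image_le (ht : IsStandard lam t) (hlam : ∀ m, Antitone (lam m))
    (r : Fin d) : IsDiagram (t '' {s | s ≤ r}) := by
  obtain ⟨⟨-, hrange⟩, hmono⟩ := ht
  rintro m a b a' b' ⟨s, hsr, hs⟩ ha hb
  have hmem : (m, a, b) ∈ diagram lam := hrange ▸ ⟨s, hs⟩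
  have hmem' : (m, a', b') ∈ Set.range t :=
    hrange ▸ isDiagram_diagram hlam m a b a' b' hmem ha hb
  obtain ⟨s', hs'⟩ := hmem'
  have hle : s' ≤ s := hmono s' s (by simp [hs, hs']) (by simpa [hs, hs']) (by simpa [hs, hs'])
  exact ⟨s', hle.trans hsr, hs'⟩

theorem IsRowReading.notMem_image_le_of_below (ht : IsRowReading lam t) {r : Fin d}
    (hM : Below (t r) M) : M ∉ t '' {s | s ≤ r} := by
  rintro ⟨s, hsr, rfl⟩
  rcases (show s ≤ r from hsr).lt_or_eq with hlt | rfl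
  · exact (ht.2 s r hlt).asymm hM.nodeLt
  · exact hM.nodeLt.asymm hM.nodeLt

/-- The first node of the row following that of `N`, in the same component. -/
def nextRowHead (N : Node l) : Node l := (N.1, N.2.1 + 1, 0)

theorem below_nextRowHead (N : Node l) : Below N (nextRowHead N) :=
  Or.inr ⟨rfl, Nat.lt_succ_self _⟩

theorem res_nextRowHead_eq_res_iff : res κ (nextRowHead N) = res κ N ↔ Even (N.2.2 + 1) := by
  have hdiff : res κ N = res κ (nextRowHead N) + ((N.2.2 + 1 : ℕ) : ZMod 2) := by
    simp only [res, nextRowHead]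
    push_cast
    ring
  rw [hdiff, left_eq_add, ZMod.natCast_eq_zero_iff_even]

theorem res_componentHead (m : Fin l) : res κ (m, 0, 0) = κ m := by
  simp [res]

theorem Addable.eq_of_notMem {m : Fin l} {a b a' b' : ℕ} (h : Addable Y (m, a, b)) (ha : a' ≤ a)
    (hb : b' ≤ b) (hnot : (m, a', b') ∉ Y) : a' = a ∧ b' = b := by
  have hmem := (h.2 m a b a' b' (Set.mem_insert _ _) ha hb).resolve_right hnot
  simpa using hmem

theorem IsDiagram.addable_nextRowHead (hY : IsDiagram Y) (hN : N ∈ Y)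
    (hnot : nextRowHead N ∉ Y) : Addable Y (nextRowHead N) := by
  refine ⟨hnot, fun m a b a' b' hmem ha hb ↦ ?_⟩
  rcases hmem with heq | hmem
  · simp only [nextRowHead, Prod.mk.injEq] at heq
    obtain ⟨rfl, rfl, rfl⟩ := heq
    obtain rfl : b' = 0 := Nat.le_zero.mp hb
    rcases Nat.le_succ_iff.mp ha with hrow | rfl
    · exact Or.inr (hY _ _ _ _ _ hN hrow (Nat.zero_le _))
    · exact Or.inl rfl
  · exact Or.inr (hY m a b a' b' hmem ha hb)

theorem IsDiagram.addable_componentHead (hY : IsDiagram Y) {m : Fin l} (hnot : (m, 0, 0) ∉ Y) :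
    Addable Y (m, 0, 0) := by
  refine ⟨hnot, fun m' a b a' b' hmem ha hb ↦ ?_⟩
  rcases hmem with heq | hmem
  · simp only [Prod.mk.injEq] at heq
    obtain ⟨rfl, rfl, rfl⟩ := heq
    obtain rfl : a' = 0 := Nat.le_zero.mp ha
    obtain rfl : b' = 0 := Nat.le_zero.mp hb
    exact Or.inl rfl
  · exact Or.inr (hY m' a b a' b' hmem ha hb)

theorem Addable.eq_nextRowHead_or_eq_componentHead (hbelow : ∀ M, Below N M → M ∉ Y)
    (hadd : Addable Y M) (hM : Below N M) :
    M = nextRowHead N ∨ ∃ m, N.1 < m ∧ M = (m, 0, 0) := by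
  obtain ⟨m, a, b⟩ := M
  obtain rfl : 0 = b := (hadd.eq_of_notMem le_rfl (Nat.zero_le b) (hbelow _ hM)).2
  rcases hM with hcomp | ⟨rfl, hrow⟩
  · obtain ⟨rfl, -⟩ := hadd.eq_of_notMem (Nat.zero_le a) le_rfl (hbelow _ (Or.inl hcomp))
    exact Or.inr ⟨m, hcomp, rfl⟩
  · obtain ⟨rfl, -⟩ := hadd.eq_of_notMem hrow le_rfl (hbelow _ (below_nextRowHead N))
    exact Or.inl rfl

theorem IsDiagram.addable_and_below_iff (hY : IsDiagram Y) (hN : N ∈ Y)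
    (hbelow : ∀ M, Below N M → M ∉ Y) :
    Addable Y M ∧ Below N M ↔ M = nextRowHead N ∨ ∃ m, N.1 < m ∧ M = (m, 0, 0) := by
  refine ⟨fun ⟨hadd, hM⟩ ↦ hadd.eq_nextRowHead_or_eq_componentHead hbelow hM, ?_⟩
  rintro (rfl | ⟨m, hm, rfl⟩)
  · have hM := below_nextRowHead N
    exact ⟨hY.addable_nextRowHead hN (hbelow _ hM), hM⟩
  · have hM : Below N (m, 0, 0) := Or.inl hm
    exact ⟨hY.addable_componentHead (hbelow _ hM), hM⟩

theorem IsDiagram.setOf_addable_below_eq (hY : IsDiagram Y) (hN : N ∈ Y)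
    (hbelow : ∀ M, Below N M → M ∉ Y) (i : ZMod 2) :
    {M | Addable Y M ∧ res κ M = i ∧ Below N M} =
      {M | M = nextRowHead N ∧ res κ (nextRowHead N) = i} ∪
        (fun m ↦ (m, 0, 0)) '' {m | N.1 < m ∧ κ m = i} := by
  ext M
  have hclass := hY.addable_and_below_iff (M := M) hN hbelow
  rw [Set.mem_ofPred_eq, and_comm (a := res κ M = i), ← and_assoc, hclass, or_and_right]
  refine or_congr (and_congr_right fun heq ↦ by rw [heq]) ⟨?_, ?_⟩
  · rintro ⟨⟨m, hm, rfl⟩, hres⟩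
    exact ⟨m, ⟨hm, (res_componentHead m).symm.trans hres⟩, rfl⟩
  · rintro ⟨m, ⟨hm, hres⟩, rfl⟩
    exact ⟨⟨m, hm, rfl⟩, (res_componentHead m).trans hres⟩

theorem IsDiagram.ncard_addable_below (hY : IsDiagram Y) (hN : N ∈ Y)
    (hbelow : ∀ M, Below N M → M ∉ Y) (i : ZMod 2) :
    {M | Addable Y M ∧ res κ M = i ∧ Below N M}.ncard =
      (if res κ (nextRowHead N) = i then 1 else 0) +
        (Finset.univ.filter fun m ↦ N.1 < m ∧ κ m = i).card := by
  have hdisj : Disjoint {M | M = nextRowHead N ∧ res κ (nextRowHead N) = i}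
      ((fun m ↦ ((m, 0, 0) : Node l)) '' {m | N.1 < m ∧ κ m = i}) := by
    rw [Set.disjoint_left]
    rintro _ ⟨rfl, -⟩ ⟨m, -, heq⟩
    simp [nextRowHead] at heq
  have hinj : Function.Injective fun m : Fin l ↦ ((m, 0, 0) : Node l) :=
    Prod.mk_left_injective (0, 0)
  have hfin : {M | M = nextRowHead N ∧ res κ (nextRowHead N) = i}.Finite :=
    (Set.finite_singleton _).subset fun _ hM ↦ hM.1
  rw [hY.setOf_addable_below_eq hN hbelow, Set.ncard_union_eq hdisj hfin (Set.toFinite _),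
    Set.ncard_image_of_injective _ hinj]
  congr 1
  · split_ifs with hres <;> simp [hres]
  · rw [← Set.ncard_coe_finset, Finset.coe_filter_univ]

theorem setOf_removable_below_eq_empty (hbelow : ∀ M, Below N M → M ∉ Y) (i : ZMod 2) :
    {M | Removable Y M ∧ res κ M = i ∧ Below N M} = ∅ :=
  Set.eq_empty_of_forall_notMem fun M ⟨hrem, _, hM⟩ ↦ hbelow M hM hrem.1

end Cyclo

open Cyclo in
/-- Let `λ` be an `l`-multipartition of `d ≥ 1` (`l ≥ 1`), let
`t = t^λ` be the row-reading tableau, let `r` range over the entries `1, …, d`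
(encoded by `r : Fin d`), let `N = (j, a, b)` be the node occupied by `r` in
`t^λ`, `i` its residue, and let `μ` be the multipartition whose diagram `Y`
consists of the nodes occupied by `1, …, r`.  Then `Y` has no removable
`i`-nodes below `N`; the number of addable `i`-nodes for `Y` below `N` equals
`β + #{m | j < m ≤ l, k_m = i}` where `β = 1` iff the (1-indexed) column `b` of
`N` is even; and consequently `d_N(μ)` equals that same number. -/
theorem statement0 (l d : ℕ) (hl : 1 ≤ l) (hd : 1 ≤ d)
    (κ : Fin l → ZMod 2) (lam : Fin l → ℕ → ℕ)
    (hlam : IsMultipartition lam d)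
    (t : Fin d → Node l) (ht : IsRowReading lam t) (r : Fin d)
    (N : Node l) (hN : N = t r)
    (i : ZMod 2) (hi : i = res κ N)
    (Y : Set (Node l)) (hY : Y = t '' {s | s ≤ r})
    (β : ℕ) (hβ : β = if (N.2.2 + 1) % 2 = 0 then 1 else 0)
    (c : ℕ) (hc : c = (Finset.univ.filter (fun m : Fin l => N.1 < m ∧ κ m = i)).card) :
    {M | Removable Y M ∧ res κ M = i ∧ Below N M} = ∅ ∧
    {M | Addable Y M ∧ res κ M = i ∧ Below N M}.ncard = β + c ∧
    dN κ Y N = (β : ℤ) + (c : ℤ) := by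
  subst hN hi hY hβ hc
  have hdiag : IsDiagram (t '' {s | s ≤ r}) := ht.isStandard.isDiagram_image_le hlam.1 r
  have hmem : t r ∈ t '' {s | s ≤ r} := ⟨r, le_refl r, rfl⟩
  have hbelow : ∀ M, Below (t r) M → M ∉ t '' {s | s ≤ r} := fun _ hM ↦
    ht.notMem_image_le_of_below hM
  have hrem := setOf_removable_below_eq_empty (κ := κ) hbelow (res κ (t r))
  have hadd := hdiag.ncard_addable_below (κ := κ) hmem hbelow (res κ (t r))
  simp only [res_nextRowHead_eq_res_iff, Nat.even_iff] at hadd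
  refine ⟨hrem, hadd, ?_⟩
  rw [dN, hrem, hadd, Set.ncard_empty, Nat.cast_zero, sub_zero, Nat.cast_add]
end

section
/- Let λ = (λ_1,…,λ_n) be a partition of d (the case l = 1, κ = (0), corresponding to the symmetric group in characteristic 2). Then every standard λ-tableau t satisfies deg(t) ≡ Σ_{a=1}^{n} ⌊λ_a/2⌋ (mod 2). -/
/-!
Core definitions for a single partition (the case `l = 1`, `κ = (0)` of the
paper, i.e. the symmetric group in quantum characteristic 2; residues mod 2).
Nodes are 0-indexed: the node `(a, b)` denotes the box in row `a+1`,
column `b+1` of the paper's 1-indexed conventions.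
-/

/-- A node `(row, column)`, 0-indexed. -/
abbrev SNode := ℕ × ℕ

namespace Sym2Char

/-- The residue `(b - a) mod 2` of a node `(a, b)`. -/
def res (N : SNode) : ZMod 2 := (N.2 : ZMod 2) - (N.1 : ZMod 2)

/-- A set of nodes is (the Young diagram of) a partition iff it is downward
closed in rows and columns. -/
def IsDiagram (Y : Set SNode) : Prop :=
  ∀ a b a' b', (a, b) ∈ Y → a' ≤ a → b' ≤ b → (a', b') ∈ Y

/-- `M` is an addable node for the diagram `Y`. -/
def Addable (Y : Set SNode) (M : SNode) : Prop :=
  M ∉ Y ∧ IsDiagram (insert M Y)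

/-- `M` is a removable node of the diagram `Y`. -/
def Removable (Y : Set SNode) (M : SNode) : Prop :=
  M ∈ Y ∧ IsDiagram (Y \ {M})

/-- `M` is below `N`: strictly lower row. -/
def Below (N M : SNode) : Prop := N.1 < M.1

/-- `d_N(Y)`: the number of addable nodes for `Y` below `N` of the same residue
as `N`, minus the number of removable nodes of `Y` below `N` of the same
residue as `N`. -/
noncomputable def dN (Y : Set SNode) (N : SNode) : ℤ :=
  ({M | Addable Y M ∧ res M = res N ∧ Below N M}.ncard : ℤ)
    - ({M | Removable Y M ∧ res M = res N ∧ Below N M}.ncard : ℤ)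

/-- The Young diagram of a partition with parts `p a` (0-indexed rows). -/
def diagram (p : ℕ → ℕ) : Set SNode := {N | N.2 < p N.1}

/-- A λ-tableau, encoded by the function sending `r : Fin d` to the node
occupied by the entry `r + 1`: a bijective filling of the diagram by `1, …, d`. -/
def IsTableau (p : ℕ → ℕ) (t : Fin d → SNode) : Prop :=
  Function.Injective t ∧ Set.range t = diagram p

/-- A standard tableau: entries increase along rows and down columns. -/
def IsStandard (p : ℕ → ℕ) (t : Fin d → SNode) : Prop :=
  IsTableau p t ∧
    ∀ r s : Fin d, (t r).1 ≤ (t s).1 → (t r).2 ≤ (t s).2 → r ≤ s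

/-- Lexicographic (row-reading) order on nodes. -/
def NodeLt (N M : SNode) : Prop :=
  N.1 < M.1 ∨ (N.1 = M.1 ∧ N.2 < M.2)

/-- The row-reading tableau `t^λ`: `1, …, d` are filled along successive rows
of `λ`, from top to bottom. -/
def IsRowReading (p : ℕ → ℕ) (t : Fin d → SNode) : Prop :=
  IsTableau p t ∧ ∀ r s : Fin d, r < s → NodeLt (t r) (t s)

/-- The degree of a (standard) tableau: `deg t = Σ_r d_{N_r}(shape of t_{≤ r})`,
which unfolds the recursion `deg t = d_N(λ) + deg (t_{≤ d-1})`, `deg ∅ = 0`. -/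
noncomputable def deg (t : Fin d → SNode) : ℤ :=
  ∑ r : Fin d, dN (t '' {s | s ≤ r}) (t r)

end Sym2Char

/-!
Let `N` be a removable node of `Y` in row `a`. Each corner of the boundary of `Y` in a row `k ≥ a`
carries a removable node in row `k` and an addable node in row `k + 1`. The residues of these two
differ exactly when `λ_k - λ_{k+1}` is odd, so the number of them with the residue of `N` is
congruent to `λ_k - λ_{k+1}` mod 2. Telescoping over `k ≥ a` and discounting `N` itself, `d_N(Y)`
is congruent to the (0-indexed) column of `N`. Hence `deg t` is congruent to the sum of the columns
of all nodes of `λ`, in which row `a` contributes `0 + 1 + ⋯ + (λ_a - 1) ≡ ⌊λ_a / 2⌋`.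
-/

namespace Sym2Char

theorem isDiagram_iff_isLowerSet {Y : Set SNode} : IsDiagram Y ↔ IsLowerSet Y :=
  ⟨fun h _ _ hle hmem => h _ _ _ _ hmem hle.1 hle.2,
    fun h _ _ _ _ hmem ha hb => h (Prod.mk_le_mk.2 ⟨ha, hb⟩) hmem⟩

theorem IsDiagram.exists_youngDiagram {Y : Set SNode} (hY : IsDiagram Y) (hfin : Y.Finite) :
    ∃ μ : YoungDiagram, (μ : Set SNode) = Y :=
  ⟨⟨hfin.toFinset, by simpa using isDiagram_iff_isLowerSet.1 hY⟩, hfin.coe_toFinset⟩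

theorem isDiagram_diagram {p : ℕ → ℕ} (hp : Antitone p) : IsDiagram (diagram p) :=
  fun _ _ _ _ hmem ha hb => (hb.trans_lt hmem).trans_le (hp ha)

section Corners

variable (μ : YoungDiagram)

theorem addable_coe_iff (k c : ℕ) :
    Addable (μ : Set SNode) (k + 1, c) ↔
      c = μ.rowLen (k + 1) ∧ μ.rowLen (k + 1) < μ.rowLen k := by
  simp only [Addable, SetLike.mem_coe, YoungDiagram.mem_iff_lt_rowLen, not_lt]
  constructor
  · rintro ⟨hle, hdiag⟩
    have hleft : c = μ.rowLen (k + 1) := by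
      simpa [YoungDiagram.mem_iff_lt_rowLen, eq_comm] using
        hdiag (k + 1) c (k + 1) (μ.rowLen (k + 1)) (Set.mem_insert _ _) le_rfl hle
    have habove : c < μ.rowLen k := by
      simpa [YoungDiagram.mem_iff_lt_rowLen] using
        hdiag (k + 1) c k c (Set.mem_insert _ _) k.le_succ le_rfl
    exact ⟨hleft, hleft ▸ habove⟩
  · rintro ⟨rfl, hlt⟩
    refine ⟨le_rfl, ?_⟩
    rintro a b a' b' (hnew | hold) ha hb
    · obtain ⟨rfl, rfl⟩ := Prod.mk.inj hnew
      simp only [Set.mem_insert_iff, Prod.mk.injEq, SetLike.mem_coe,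
        YoungDiagram.mem_iff_lt_rowLen]
      rcases ha.eq_or_lt with rfl | hlt'
      · omega
      · have := μ.rowLen_anti a' k (Nat.le_of_lt_succ hlt')
        omega
    · exact Or.inr (μ.up_left_mem ha hb hold)

theorem removable_coe_iff (k c : ℕ) :
    Removable (μ : Set SNode) (k, c) ↔ c + 1 = μ.rowLen k ∧ μ.rowLen (k + 1) < μ.rowLen k := by
  constructor
  · rintro ⟨hmem, hdiag⟩
    have hright : (k, c + 1) ∉ μ := fun h =>
      (hdiag k (c + 1) k c ⟨h, by simp⟩ le_rfl c.le_succ).2 rfl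
    have hbelow : (k + 1, c) ∉ μ := fun h =>
      (hdiag (k + 1) c k c ⟨h, by simp⟩ k.le_succ le_rfl).2 rfl
    rw [SetLike.mem_coe] at hmem
    rw [YoungDiagram.mem_iff_lt_rowLen] at hmem hright hbelow
    omega
  · rintro ⟨hc, hlt⟩
    refine ⟨YoungDiagram.mem_iff_lt_rowLen.2 (by omega), isDiagram_iff_isLowerSet.2 ?_⟩
    refine μ.isLowerSet.erase fun ⟨a, b⟩ hmem hle => ?_
    obtain ⟨ha, hb⟩ := Prod.mk_le_mk.1 hle
    have hbrow : b < μ.rowLen a := YoungDiagram.mem_iff_lt_rowLen.1 hmem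
    rcases ha.eq_or_lt with rfl | ha
    · exact Prod.ext rfl (by dsimp only; omega)
    · have := μ.rowLen_anti (k + 1) a ha
      omega

/-- The rows `k ≥ a` of `μ` that are strictly longer than the next row. These index the removable
nodes of `μ` in rows `≥ a`, which lie in row `k`, and also the addable nodes for `μ` in
rows `> a`, which lie in row `k + 1`. -/
def cornerRows (a : ℕ) : Finset ℕ :=
  {k ∈ Finset.Ico a (μ.colLen 0) | μ.rowLen (k + 1) < μ.rowLen k}

theorem mem_cornerRows {a k : ℕ} :
    k ∈ cornerRows μ a ↔ a ≤ k ∧ μ.rowLen (k + 1) < μ.rowLen k := by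
  simp only [cornerRows, Finset.mem_filter, Finset.mem_Ico, ← YoungDiagram.mem_iff_lt_colLen,
    YoungDiagram.mem_iff_lt_rowLen]
  omega

theorem sum_cornerRows_rowLen_sub {R : Type*} [AddCommGroupWithOne R] (a : ℕ) :
    ∑ k ∈ cornerRows μ a, ((μ.rowLen k : R) - μ.rowLen (k + 1)) = μ.rowLen a := by
  have hnoncorner : ∀ k ∈ Finset.Ico a (μ.colLen 0),
      (μ.rowLen k : R) - μ.rowLen (k + 1) ≠ 0 → μ.rowLen (k + 1) < μ.rowLen k := by
    refine fun k _ hne => (μ.rowLen_anti k (k + 1) k.le_succ).lt_of_ne fun heq => hne ?_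
    rw [heq, sub_self]
  have hempty {k : ℕ} (hk : μ.colLen 0 ≤ k) : μ.rowLen k = 0 := by
    rwa [← Nat.not_lt, ← YoungDiagram.mem_iff_lt_colLen, YoungDiagram.mem_iff_lt_rowLen,
      Nat.not_lt, Nat.le_zero] at hk
  rw [cornerRows, Finset.sum_filter_of_ne hnoncorner]
  rcases le_total a (μ.colLen 0) with ha | ha
  · rw [← neg_inj, ← Finset.sum_neg_distrib]
    simpa [hempty le_rfl] using Finset.sum_Ico_sub (fun k => (μ.rowLen k : R)) ha
  · simp [Finset.Ico_eq_empty_of_le ha, hempty ha]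

theorem ncard_addable_gt (i : ZMod 2) (a : ℕ) :
    {M | Addable (μ : Set SNode) M ∧ res M = i ∧ a < M.1}.ncard =
      {k ∈ cornerRows μ a | res (k + 1, μ.rowLen (k + 1)) = i}.card := by
  rw [← Set.ncard_coe_finset, ← Set.ncard_image_of_injective _
    (f := fun k => ((k + 1, μ.rowLen (k + 1)) : SNode)) fun k l h => by simp_all]
  congr 1
  ext ⟨_ | k, c⟩
  · simp
  · simp only [Set.mem_ofPred_eq, addable_coe_iff, Finset.coe_filter, mem_cornerRows, Set.mem_image,
      Prod.mk.injEq, Nat.lt_succ_iff]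
    constructor
    · rintro ⟨⟨rfl, hlt⟩, hres, ha⟩
      exact ⟨k, ⟨⟨ha, hlt⟩, hres⟩, rfl, rfl⟩
    · rintro ⟨l, ⟨⟨ha, hlt⟩, hres⟩, hl, rfl⟩
      obtain rfl := Nat.succ.inj hl
      exact ⟨⟨rfl, hlt⟩, hres, ha⟩

theorem ncard_removable_ge (i : ZMod 2) (a : ℕ) :
    {M | Removable (μ : Set SNode) M ∧ res M = i ∧ a ≤ M.1}.ncard =
      {k ∈ cornerRows μ a | res (k, μ.rowLen k - 1) = i}.card := by
  rw [← Set.ncard_coe_finset, ← Set.ncard_image_of_injective _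
    (f := fun k => ((k, μ.rowLen k - 1) : SNode)) fun k l h => (Prod.mk.inj h).1]
  congr 1
  ext ⟨k, c⟩
  simp only [Set.mem_ofPred_eq, removable_coe_iff, Finset.coe_filter, mem_cornerRows, Set.mem_image,
    Prod.mk.injEq]
  constructor
  · rintro ⟨⟨hc, hlt⟩, hres, ha⟩
    obtain rfl : c = μ.rowLen k - 1 := by omega
    exact ⟨k, ⟨⟨ha, hlt⟩, hres⟩, rfl, rfl⟩
  · rintro ⟨k, ⟨⟨ha, hlt⟩, hres⟩, rfl, rfl⟩
    exact ⟨⟨by omega, hlt⟩, hres, ha⟩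

theorem ite_res_add_ite_res (x y k : ℕ) (i : ZMod 2) :
    ((if res (k + 1, x) = i then 1 else 0) + (if res (k, y) = i then 1 else 0) : ZMod 2) =
      (y + 1 : ℕ) - x := by
  have hresidues : ∀ x y k i : ZMod 2, ((if x - (k + 1) = i then 1 else 0) +
      (if y - k = i then 1 else 0) : ZMod 2) = y + 1 - x := by decide
  convert hresidues x y k i using 4 <;> simp [res]

theorem natCast_ncard_addable_add_ncard_removable (i : ZMod 2) (a : ℕ) :
    (({M | Addable (μ : Set SNode) M ∧ res M = i ∧ a < M.1}.ncard +
      {M | Removable (μ : Set SNode) M ∧ res M = i ∧ a ≤ M.1}.ncard : ℕ) : ZMod 2) =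
      μ.rowLen a := by
  rw [ncard_addable_gt, ncard_removable_ge, Nat.cast_add, Finset.natCast_card_filter,
    Finset.natCast_card_filter, ← Finset.sum_add_distrib, ← sum_cornerRows_rowLen_sub]
  refine Finset.sum_congr rfl fun k hk => ?_
  have hpos : 1 ≤ μ.rowLen k := Nat.one_le_of_lt ((mem_cornerRows μ).1 hk).2
  rw [ite_res_add_ite_res, Nat.sub_add_cancel hpos]

variable {μ}

theorem ncard_removable_ge_eq_succ {N : SNode} (hN : Removable (μ : Set SNode) N) :
    {M | Removable (μ : Set SNode) M ∧ res M = res N ∧ N.1 ≤ M.1}.ncard =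
      {M | Removable (μ : Set SNode) M ∧ res M = res N ∧ Below N M}.ncard + 1 := by
  have hrow {M : SNode} (hM : Removable (μ : Set SNode) M) (h : N.1 = M.1) : M = N := by
    have hMlen := ((removable_coe_iff μ M.1 M.2).1 hM).1
    have hNlen := ((removable_coe_iff μ N.1 N.2).1 hN).1
    exact Prod.ext h.symm (by rw [← h] at hMlen; omega)
  have hfin : {M | Removable (μ : Set SNode) M ∧ res M = res N ∧ Below N M}.Finite :=
    μ.cells.finite_toSet.subset fun M hM => hM.1.1
  rw [← Set.ncard_insert_of_notMem (fun h => lt_irrefl _ h.2.2) hfin]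
  congr 1
  ext M
  simp only [Set.mem_ofPred_eq, Set.mem_insert_iff, Below]
  constructor
  · rintro ⟨hM, hres, hle⟩
    exact hle.eq_or_lt.imp (hrow hM) fun hlt => ⟨hM, hres, hlt⟩
  · rintro (rfl | ⟨hM, hres, hlt⟩)
    · exact ⟨hN, rfl, le_rfl⟩
    · exact ⟨hM, hres, hlt.le⟩

end Corners

theorem intCast_dN_of_removable {Y : Set SNode} {N : SNode} (hY : IsDiagram Y) (hfin : Y.Finite)
    (hN : Removable Y N) : (dN Y N : ZMod 2) = N.2 := by
  obtain ⟨μ, rfl⟩ := hY.exists_youngDiagram hfin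
  have hcount := natCast_ncard_addable_add_ncard_removable μ (res N) N.1
  rw [ncard_removable_ge_eq_succ hN, ← ((removable_coe_iff μ N.1 N.2).1 hN).1] at hcount
  push_cast [← add_assoc] at hcount
  rw [dN, Int.cast_sub, Int.cast_natCast, Int.cast_natCast, CharTwo.sub_eq_add]
  exact add_right_cancel hcount

section Tableaux

variable {d : ℕ} {p : ℕ → ℕ} {t : Fin d → SNode}

theorem IsStandard.isDiagram_image (ht : IsStandard p t) (hp : Antitone p) {S : Set (Fin d)}
    (hS : IsLowerSet S) : IsDiagram (t '' S) := by
  rintro a b a' b' ⟨s, hs, hts⟩ ha hb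
  have hmem : (a, b) ∈ diagram p := hts ▸ ht.1.2 ▸ Set.mem_range_self s
  obtain ⟨s', hts'⟩ : (a', b') ∈ Set.range t :=
    ht.1.2 ▸ isDiagram_diagram hp a b a' b' hmem ha hb
  exact ⟨s', hS (ht.2 s' s (by rwa [hts, hts']) (by rwa [hts, hts'])) hs, hts'⟩

theorem IsStandard.removable_image_Iic (ht : IsStandard p t) (hp : Antitone p) (r : Fin d) :
    Removable (t '' Set.Iic r) (t r) := by
  refine ⟨Set.mem_image_of_mem t Set.self_mem_Iic, ?_⟩
  rw [← Set.image_singleton, ← Set.image_sdiff ht.1.1, Set.Iic_sdiff_right]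
  exact ht.isDiagram_image hp (isLowerSet_Iio r)

theorem IsStandard.intCast_deg (ht : IsStandard p t) (hp : Antitone p) :
    (deg t : ZMod 2) = ∑ r, ((t r).2 : ZMod 2) := by
  rw [deg, Int.cast_sum]
  exact Finset.sum_congr rfl fun r _ => intCast_dN_of_removable
    (ht.isDiagram_image hp (isLowerSet_Iic r)) (Set.toFinite _) (ht.removable_image_Iic hp r)

theorem IsTableau.sum_comp {R : Type*} [AddCommMonoid R] {n : ℕ} (ht : IsTableau p t)
    (hpn : ∀ a, n ≤ a → p a = 0) (f : SNode → R) :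
    ∑ r, f (t r) = ∑ a ∈ Finset.range n, ∑ b ∈ Finset.range (p a), f (a, b) := by
  have hmem (N : SNode) : N ∈ Finset.univ.map ⟨t, ht.1⟩ ↔
      N.1 ∈ Finset.range n ∧ N.2 ∈ Finset.range (p N.1) := by
    have hrow : N.2 < p N.1 → N.1 < n := fun hN =>
      lt_of_not_ge fun hn => Nat.not_lt_zero _ (hpn _ hn ▸ hN)
    have hdiagram : N ∈ Set.range t ↔ N.2 < p N.1 := by rw [ht.2]; rfl
    simpa [and_iff_right_of_imp hrow] using hdiagram
  rw [← Finset.sum_finset_product _ _ _ hmem, Finset.sum_map]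
  rfl

end Tableaux

theorem sum_range_natCast_zmod_two (m : ℕ) :
    ∑ b ∈ Finset.range m, (b : ZMod 2) = (m / 2 : ℕ) := by
  induction m with
  | zero => simp
  | succ m ih =>
    have hhalf : (m + 1) / 2 = m / 2 + m % 2 := by omega
    rw [Finset.sum_range_succ, ih, hhalf, Nat.cast_add, ZMod.natCast_mod]

end Sym2Char

open Sym2Char in
/-- For a partition `λ = (λ_1, …, λ_n)` of `d`, every standard
`λ`-tableau `t` satisfies `deg t ≡ Σ_{a=1}^n ⌊λ_a/2⌋ (mod 2)`. -/
theorem statement6 (n d : ℕ) (p : ℕ → ℕ)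
    (hp : Antitone p) (hpn : ∀ a, n ≤ a → p a = 0)
    (hpd : ∑ a ∈ Finset.range n, p a = d)
    (t : Fin d → SNode) (ht : IsStandard p t) :
    ((deg t : ℤ) : ZMod 2) = ((∑ a ∈ Finset.range n, p a / 2 : ℕ) : ZMod 2) := by
  calc
    (deg t : ZMod 2) = ∑ r, ((t r).2 : ZMod 2) := ht.intCast_deg hp
    _ = ∑ a ∈ Finset.range n, ∑ b ∈ Finset.range (p a), (b : ZMod 2) :=
      ht.1.sum_comp hpn fun N => (N.2 : ZMod 2)
    _ = ((∑ a ∈ Finset.range n, p a / 2 : ℕ) : ZMod 2) := by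
      simp only [sum_range_natCast_zmod_two, Nat.cast_sum]
end
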